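/- Let n ≥ 1 and for 0 ≤ j ≤ 2n−2 set h_j = #{σ ∈ CA_{2n} : cswap(σ) = j}. Then the sequence (h_0, h_1, …, h_{2n−2}) is symmetric and unimodal: h_j = h_{2n−2−j} for all 0 ≤ j ≤ 2n−2, and h_j ≤ h_{j+1} for all 0 ≤ j < n−1. -/

import Mathlib

/-- The cyclic successor of an index/value in `Fin m` (i.e. `i + 1 mod m`). -/
def cyclicSucc {m : ℕ} (i : Fin m) : Fin m := ⟨((i : ℕ) + 1) % m, Nat.mod_lt _ i.pos⟩

/-- `σ` (a permutation of `{0,…,2n−1}`, standing for `{1,…,2n}`) is cyclically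
alternating: `σ_1 < σ_2 > σ_3 < ⋯ > σ_{2n−1} < σ_{2n} > σ_1` (0-indexed, with
indices taken cyclically). -/
def IsCAP {n : ℕ} (σ : Equiv.Perm (Fin (2 * n))) : Prop :=
  ∀ i : Fin (2 * n),
    (Even (i : ℕ) → σ i < σ (cyclicSucc i)) ∧ (Odd (i : ℕ) → σ (cyclicSucc i) < σ i)

/-- The cyclic swap set of `σ`: values `k` (with `k+1` also a value, i.e.
`k ∈ {1,…,2n−1}` in 1-indexed terms) such that `σ⁻¹(k) > σ⁻¹(k+1) + 1`. -/
def CSwapSet {n : ℕ} (σ : Equiv.Perm (Fin (2 * n))) : Set (Fin (2 * n)) :=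
  {k | (k : ℕ) + 1 < 2 * n ∧
    ((σ⁻¹ (cyclicSucc k) : Fin (2 * n)) : ℕ) + 1 < ((σ⁻¹ k : Fin (2 * n)) : ℕ)}

/-- The cyclic swap statistic `cswap(σ)`. -/
noncomputable def cswap {n : ℕ} (σ : Equiv.Perm (Fin (2 * n))) : ℕ := (CSwapSet σ).ncard

open Polynomial in
inductive GoodP : ℕ → ℕ[X] → Prop
  | zero (d : ℕ) : GoodP d 0
  | one : GoodP 0 1
  | add {d : ℕ} {p q : ℕ[X]} : GoodP d p → GoodP d q → GoodP d (p + q)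
  | mulX {d : ℕ} {p : ℕ[X]} : GoodP d p → GoodP (d + 2) (X * p)
  | mulS {d : ℕ} {p : ℕ[X]} : GoodP d p → GoodP (d + 1) ((1 + X) * p)

section poly
open Polynomial

lemma GoodP.mul {d e : ℕ} {p q : ℕ[X]} (hp : GoodP d p) (hq : GoodP e q) :
    GoodP (d + e) (p * q) := by
  induction hp with
  | zero d => simpa using GoodP.zero _
  | one => simpa using hq
  | add _ _ h1 h2 => rw [add_mul]; exact h1.add h2
  | mulX _ h => rw [mul_assoc, add_right_comm]; exact h.mulX
  | mulS _ h => rw [mul_assoc, add_right_comm]; exact h.mulS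

lemma GoodP.sum {ι : Type*} (s : Finset ι) (d : ℕ) (p : ι → ℕ[X])
    (h : ∀ i ∈ s, GoodP d (p i)) : GoodP d (∑ i ∈ s, p i) := by
  classical
  induction s using Finset.induction_on with
  | empty => simpa using GoodP.zero _
  | insert a s ha ih =>
    rw [Finset.sum_insert ha]
    exact (h a (by simp)).add (ih fun i hi => h i (by simp [hi]))

lemma GoodP.cmul {d : ℕ} {p : ℕ[X]} (h : GoodP d p) (c : ℕ) : GoodP d (C c * p) := by
  induction c with
  | zero => simpa using GoodP.zero _
  | succ c ih => rw [C_add, add_mul]; exact ih.add (by simpa using h)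

lemma GoodP.su {d : ℕ} {p : ℕ[X]} (h : GoodP d p) :
    (∀ i j, i + j = d → p.coeff i = p.coeff j) ∧ (∀ j, d < j → p.coeff j = 0) ∧
    (∀ j, 2 * j + 1 ≤ d → p.coeff j ≤ p.coeff (j + 1)) := by
  induction h with
  | zero d => simp
  | one =>
    refine ⟨?_, ?_, ?_⟩
    · intro i j h
      obtain ⟨rfl, rfl⟩ : i = 0 ∧ j = 0 := by omega
      rfl
    · intro j hj
      rw [coeff_one]; simp; omega
    · intro j hj; omega
  | add _ _ h1 h2 =>
    obtain ⟨a1, b1, c1⟩ := h1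
    obtain ⟨a2, b2, c2⟩ := h2
    refine ⟨?_, ?_, ?_⟩
    · intro i j h; simp [a1 i j h, a2 i j h]
    · intro j h; simp [b1 j h, b2 j h]
    · intro j h; simp only [coeff_add]; exact add_le_add (c1 j h) (c2 j h)
  | @mulX d p _ h =>
    obtain ⟨a, b, c⟩ := h
    refine ⟨?_, ?_, ?_⟩
    · intro i j h
      rcases i with _ | i <;> rcases j with _ | j
      · rfl
      · rw [coeff_X_mul, coeff_X_mul_zero, b _ (by omega)]
      · rw [coeff_X_mul, coeff_X_mul_zero, b _ (by omega)]
      · rw [coeff_X_mul, coeff_X_mul, a i j (by omega)]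
    · intro j h
      rcases j with _ | j
      · omega
      · rw [coeff_X_mul, b _ (by omega)]
    · intro j h
      rcases j with _ | j
      · simp
      · rw [coeff_X_mul, coeff_X_mul]; exact c _ (by omega)
  | @mulS d p _ h =>
    obtain ⟨a, b, c⟩ := h
    refine ⟨?_, ?_, ?_⟩
    · intro i j h
      rw [add_mul, one_mul, coeff_add, coeff_add]
      rcases i with _ | i <;> rcases j with _ | j
      · rfl
      · rw [coeff_X_mul, coeff_X_mul_zero, b (j + 1) (by omega), a 0 j (by omega)]; ring
      · rw [coeff_X_mul, coeff_X_mul_zero, b (i + 1) (by omega), a 0 i (by omega)]; ring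
      · rw [coeff_X_mul, coeff_X_mul, a (i + 1) j (by omega), a i (j + 1) (by omega)]; ring
    · intro j h
      rw [add_mul, one_mul, coeff_add]
      rcases j with _ | j
      · omega
      · rw [coeff_X_mul, b _ (by omega), b _ (by omega)]
    · intro j h
      rw [add_mul, one_mul, coeff_add, coeff_add]
      rcases j with _ | j
      · rw [coeff_X_mul, coeff_X_mul_zero]; omega
      · rw [coeff_X_mul, coeff_X_mul]
        by_cases h2 : 2 * (j + 1) + 1 ≤ d
        · have := c j (by omega)
          have := c (j + 1) h2
          omega
        · have := a j (j + 1 + 1) (by omega)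
          omega
end poly

/-- descents of a list -/
def lDes : List ℕ → ℕ
  | [] => 0
  | [_] => 0
  | a :: b :: l => (if b < a then 1 else 0) + lDes (b :: l)

lemma lDes_append (u : List ℕ) (a : ℕ) (v : List ℕ) :
    lDes (u ++ a :: v) = lDes (u ++ [a]) + lDes (a :: v) := by
  induction u with
  | nil => simp [lDes]
  | cons x u ih =>
    cases u with
    | nil => simp [lDes]
    | cons y u =>
      simp only [List.cons_append, lDes] at ih ⊢
      rw [ih]; ring

lemma lDes_up (u : List ℕ) (a : ℕ) (h : ∀ x ∈ u, x < a) : lDes (u ++ [a]) = lDes u := by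
  induction u with
  | nil => simp [lDes]
  | cons x u ih =>
    have ih := ih fun y hy => h y (by simp [hy])
    cases u with
    | nil => have := h x (by simp); simp [lDes]; omega
    | cons y u =>
      simp only [List.cons_append, lDes] at ih ⊢
      rw [ih]

lemma lDes_down (u : List ℕ) (a : ℕ) (h : ∀ x ∈ u, a < x) (hu : u ≠ []) :
    lDes (u ++ [a]) = lDes u + 1 := by
  induction u with
  | nil => simp at hu
  | cons x u ih =>
    have ih := ih fun y hy => h y (by simp [hy])
    cases u with
    | nil => have := h x (by simp); simp [lDes]; omega
    | cons y u =>
      simp only [List.cons_append, lDes] at ih ⊢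
      rw [ih (by simp)]; ring

lemma lDes_cons_max (a : ℕ) (v : List ℕ) (h : ∀ x ∈ v, x < a) (hv : v ≠ []) :
    lDes (a :: v) = lDes v + 1 := by
  cases v with
  | nil => simp at hv
  | cons y u => have := h y (by simp); simp [lDes, this]; ring

abbrev PL (s : Finset ℕ) : Finset (List ℕ) := s.val.lists.toFinset

lemma mem_PL {s : Finset ℕ} {l : List ℕ} : l ∈ PL s ↔ l.Nodup ∧ l.toFinset = s := by
  rw [Multiset.mem_toFinset, Multiset.mem_lists_iff]
  constructor
  · intro h
    have h1 : l.Nodup := by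
      have := s.nodup; rw [h] at this; simpa using this
    refine ⟨h1, ?_⟩
    ext x
    have h2 : x ∈ s ↔ x ∈ s.val := Iff.rfl
    rw [h2, h]; simp
  · rintro ⟨h1, rfl⟩
    simp [List.toFinset_val, h1.dedup]

section sums
open Polynomial

lemma PL_empty : PL ∅ = {[]} := by
  ext l; rw [mem_PL]; simp; rintro rfl; simp

lemma sum_split_max {M : Type*} [AddCommMonoid M] (B : Finset ℕ) (m : ℕ) (hm : m ∉ B) (g : List ℕ → M) :
    ∑ l ∈ PL (insert m B), g l =
      ∑ U ∈ B.powerset, ∑ u ∈ PL U, ∑ v ∈ PL (B \ U), g (u ++ m :: v) := by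
  simp_rw [← Finset.sum_product']
  rw [Finset.sum_sigma']
  symm
  refine Finset.sum_bij (fun x _ => x.2.1 ++ m :: x.2.2) ?_ ?_ ?_ ?_
  · rintro ⟨U, u, v⟩ h
    simp only [Finset.mem_sigma, Finset.mem_powerset, Finset.mem_product, mem_PL] at h ⊢
    obtain ⟨hU, ⟨nu, rfl⟩, nv, hv⟩ := h
    have hv' : ∀ x, x ∈ v ↔ x ∈ B ∧ x ∉ u := by
      intro x; rw [← List.mem_toFinset, hv]; simp
    have hu' : ∀ x, x ∈ u → x ∈ B := by
      intro x hx; exact hU (by simpa using hx)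
    constructor
    · rw [List.nodup_append]
      refine ⟨nu, ?_, ?_⟩
      · rw [List.nodup_cons]; exact ⟨fun h => hm ((hv' _).1 h).1, nv⟩
      · intro a ha b hb hab
        subst hab
        rcases List.mem_cons.1 hb with rfl | hb
        · exact hm (hu' _ ha)
        · exact ((hv' _).1 hb).2 ha
    · ext x
      simp only [List.mem_toFinset, List.mem_append, List.mem_cons, hv', Finset.mem_insert]
      have := hu' x
      tauto
  · rintro ⟨U, u, v⟩ h ⟨U', u', v'⟩ h' heq
    simp only [Finset.mem_sigma, Finset.mem_powerset, Finset.mem_product, mem_PL] at h h' heq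
    obtain ⟨hU, ⟨nu, rfl⟩, nv, hv⟩ := h
    obtain ⟨hU', ⟨nu', rfl⟩, nv', hv'⟩ := h'
    have h1 : m ∉ u := fun h => hm (hU (by simpa using h))
    have h2 : m ∉ u' := fun h => hm (hU' (by simpa using h))
    have e1 : u = u' := by
      have := congrArg (List.takeWhile (fun x => x ≠ m)) heq
      have t : ∀ (u v : List ℕ), m ∉ u → List.takeWhile (fun x => x ≠ m) (u ++ m :: v) = u := by
        intro u v hu
        rw [List.takeWhile_append_of_pos]
        · simp
        · intro a ha; simp; rintro rfl; exact hu ha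
      rwa [t _ _ h1, t _ _ h2] at this
    subst e1
    simp at heq
    subst heq
    rfl
  · intro l hl
    rw [mem_PL] at hl
    obtain ⟨nl, hl⟩ := hl
    have hml : m ∈ l := by rw [← List.mem_toFinset, hl]; simp
    obtain ⟨u, v, rfl⟩ := List.append_of_mem hml
    refine ⟨⟨u.toFinset, u, v⟩, ?_, rfl⟩
    have key : ∀ x, (x ∈ u ∨ x = m ∨ x ∈ v) ↔ (x = m ∨ x ∈ B) := by
      intro x
      have := Finset.ext_iff.1 hl x
      simp only [List.mem_toFinset, List.mem_append, List.mem_cons, Finset.mem_insert] at this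
      exact this
    simp only [Finset.mem_sigma, Finset.mem_powerset, Finset.mem_product, mem_PL]
    rw [List.nodup_append, List.nodup_cons] at nl
    obtain ⟨n1, ⟨n2, n3⟩, n4⟩ := nl
    refine ⟨?_, ⟨n1, by trivial⟩, n3, ?_⟩
    · intro x hx
      have hx : x ∈ u := by simpa using hx
      have := (key x).1 (Or.inl hx)
      rcases this with rfl | h
      · exact absurd rfl (n4 _ hx _ (by simp))
      · exact h
    · ext x
      simp only [List.mem_toFinset, Finset.mem_sdiff]
      constructor
      · intro hx
        refine ⟨?_, fun h => n4 _ h _ (by simp [hx]) rfl⟩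
        rcases (key x).1 (by tauto) with rfl | h
        · exact absurd hx n2
        · exact h
      · rintro ⟨hx, hxu⟩
        rcases (key x).2 (Or.inr hx) with h | rfl | h
        · exact absurd h hxu
        · exact absurd hx hm
        · exact h
  · intros; rfl

noncomputable def EP (s : Finset ℕ) : ℕ[X] := ∑ l ∈ PL s, X ^ lDes l

lemma EP_good : ∀ (d : ℕ) (s : Finset ℕ), s.card = d + 1 → GoodP d (EP s) := by
  intro d
  induction d using Nat.strong_induction_on with
  | _ d ih =>
  intro s hs
  have hne : s.Nonempty := by rw [← Finset.card_pos]; omega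
  obtain ⟨m, B, hm, rfl, hlt⟩ : ∃ m B, m ∉ B ∧ s = insert m B ∧ ∀ x ∈ B, x < m := by
    refine ⟨s.max' hne, s.erase (s.max' hne), by simp, ?_, ?_⟩
    · rw [Finset.insert_erase (s.max'_mem hne)]
    · intro x hx; exact Finset.lt_max'_of_mem_erase_max' s hne hx
  rw [Finset.card_insert_of_notMem hm] at hs
  have hB : B.card = d := by omega
  rw [EP, sum_split_max B m hm]
  have key : ∀ U ∈ B.powerset, (∑ u ∈ PL U, ∑ v ∈ PL (B \ U), (X : ℕ[X]) ^ lDes (u ++ m :: v)) =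
      EP U * (if U = B then 1 else X * EP (B \ U)) := by
    intro U hU
    rw [EP, Finset.sum_mul]
    refine Finset.sum_congr rfl fun u hu => ?_
    rw [mem_PL] at hu
    rw [Finset.mem_powerset] at hU
    have h1 : ∀ v, lDes (u ++ m :: v) = lDes u + lDes (m :: v) := by
      intro v
      rw [lDes_append, lDes_up]
      intro x hx; exact hlt x (hU (by rw [← hu.2]; simpa using hx))
    split_ifs with h
    · subst h
      simp [PL_empty, h1, lDes]
    · rw [EP, Finset.mul_sum, Finset.mul_sum]
      refine Finset.sum_congr rfl fun v hv => ?_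
      rw [mem_PL] at hv
      have hv2 : ∀ x ∈ v, x < m := by
        intro x hx
        have : x ∈ B \ U := by rw [← hv.2]; simpa using hx
        exact hlt x (Finset.mem_sdiff.1 this).1
      have hv3 : v ≠ [] := by
        rintro rfl
        apply h
        refine Finset.Subset.antisymm hU ?_
        rw [← Finset.sdiff_eq_empty_iff_subset, ← hv.2]; rfl
      rw [h1, lDes_cons_max m v hv2 hv3]; ring
  rw [Finset.sum_congr rfl key]
  have hE : EP ∅ = 1 := by simp [EP, PL_empty, lDes]
  by_cases hd : d = 0
  · subst hd
    have : B = ∅ := by simpa using hB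
    subst this
    simp [hE]; exact GoodP.one
  have hBne : B ≠ ∅ := by rintro rfl; simp at hB; omega
  rw [← Finset.add_sum_erase _ _ (Finset.empty_mem_powerset B),
    ← Finset.add_sum_erase _ _ (show B ∈ B.powerset.erase ∅ by simp [hBne])]
  rw [if_neg (Ne.symm hBne), if_pos rfl, hE, ← add_assoc]
  apply GoodP.add
  · obtain ⟨e, rfl⟩ : ∃ e, d = e + 1 := ⟨d - 1, by omega⟩
    have := (ih e (by omega) B hB).mulS
    convert this using 1
    simp; ring
  · apply GoodP.sum
    intro U hU
    simp only [Finset.mem_erase, Finset.mem_powerset] at hU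
    obtain ⟨h1, h2, h3⟩ := hU
    rw [if_neg h1]
    have c1 := Finset.card_sdiff_add_card_eq_card h3
    have c2 : 0 < U.card := Finset.card_pos.2 (Finset.nonempty_iff_ne_empty.2 h2)
    have c3 : U.card < B.card := Finset.card_lt_card (Finset.ssubset_iff_subset_ne.2 ⟨h3, h1⟩)
    have g1 := ih (U.card - 1) (by omega) U (by omega)
    have g2 := ih ((B \ U).card - 1) (by omega) (B \ U) (by omega)
    have := (g1.mul g2).mulX
    convert this using 1
    · omega
    · ring
end sums

section blocks
open Polynomial

lemma sum_block {M : Type*} [AddCommMonoid M] (p : ℕ → Prop) [DecidablePred p]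
    (s : Finset ℕ) (g : List ℕ → M) :
    ∑ l ∈ PL s, g l =
      ∑ U ∈ (s.filter p).powerset, ∑ u ∈ PL U,
        ∑ v ∈ (PL (s \ U)).filter (fun v => ∀ a ∈ v.head?, ¬ p a), g (u ++ v) := by
  simp_rw [← Finset.sum_product']
  rw [Finset.sum_sigma']
  symm
  refine Finset.sum_bij (fun x _ => x.2.1 ++ x.2.2) ?_ ?_ ?_ ?_
  · rintro ⟨U, u, v⟩ h
    simp only [Finset.mem_sigma, Finset.mem_powerset, Finset.mem_product, Finset.mem_filter,
      mem_PL] at h ⊢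
    obtain ⟨hU, ⟨nu, rfl⟩, ⟨nv, hv⟩, -⟩ := h
    have hv' : ∀ x, x ∈ v ↔ x ∈ s ∧ x ∉ u := by
      intro x; rw [← List.mem_toFinset, hv]; simp
    have hu' : ∀ x, x ∈ u → x ∈ s := by
      intro x hx; exact (Finset.mem_filter.1 (hU (by simpa using hx))).1
    constructor
    · rw [List.nodup_append]
      refine ⟨nu, nv, ?_⟩
      intro a ha b hb hab
      subst hab
      exact ((hv' _).1 hb).2 ha
    · ext x
      simp only [List.mem_toFinset, List.mem_append, hv']
      have := hu' x
      tauto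
  · rintro ⟨U, u, v⟩ h ⟨U', u', v'⟩ h' heq
    simp only [Finset.mem_sigma, Finset.mem_powerset, Finset.mem_product, Finset.mem_filter,
      mem_PL] at h h' heq
    obtain ⟨hU, ⟨nu, rfl⟩, ⟨nv, hv⟩, hh⟩ := h
    obtain ⟨hU', ⟨nu', rfl⟩, ⟨nv', hv'⟩, hh'⟩ := h'
    have t : ∀ (u v : List ℕ), (∀ x ∈ u, p x) → (∀ a ∈ v.head?, ¬ p a) →
        List.takeWhile (fun x => p x) (u ++ v) = u := by
      intro u v hu hv
      rw [List.takeWhile_append_of_pos]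
      · cases v with
        | nil => simp
        | cons a v => have := hv a (by simp); simp [this]
      · intro a ha; simpa using hu a ha
    have e1 : u = u' := by
      have := congrArg (List.takeWhile (fun x => p x)) heq
      rwa [t u v (fun x hx => (Finset.mem_filter.1 (hU (by simpa using hx))).2) hh,
        t u' v' (fun x hx => (Finset.mem_filter.1 (hU' (by simpa using hx))).2) hh'] at this
    subst e1
    simp at heq
    subst heq
    rfl
  · intro l hl
    rw [mem_PL] at hl
    obtain ⟨nl, rfl⟩ := hl
    refine ⟨⟨(l.takeWhile (fun x => p x)).toFinset, l.takeWhile (fun x => p x),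
      l.dropWhile (fun x => p x)⟩, ?_, List.takeWhile_append_dropWhile⟩
    have hd : ∀ a ∈ (l.dropWhile (fun x => p x)).head?, ¬ p a := by
      intro a ha
      have := List.head?_dropWhile_not (fun x => decide (p x)) l
      rw [Option.mem_def] at ha
      rw [ha] at this
      simpa using this
    have ht : ∀ a ∈ l.takeWhile (fun x => p x), p a := by
      intro a ha; simpa using List.mem_takeWhile_imp ha
    have hl := List.takeWhile_append_dropWhile (p := fun x => decide (p x)) (l := l)
    generalize l.takeWhile (fun x => p x) = u at *
    generalize l.dropWhile (fun x => p x) = v at *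
    subst hl
    simp only [Finset.mem_sigma, Finset.mem_powerset, Finset.mem_product, mem_PL,
      Finset.mem_filter]
    rw [List.nodup_append] at nl
    obtain ⟨n1, n3, n4⟩ := nl
    refine ⟨?_, ⟨n1, by trivial⟩, ⟨n3, ?_⟩, hd⟩
    · intro x hx
      have hx : x ∈ u := by simpa using hx
      simp [hx, ht x hx]
    · ext x
      simp only [List.mem_toFinset, Finset.mem_sdiff, List.mem_append]
      constructor
      · intro hx
        exact ⟨Or.inr hx, fun h => n4 _ h _ hx rfl⟩
      · tauto
  · intros; rfl

def InvF (m : ℕ) (f : List ℕ → ℕ) : Prop :=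
  ∀ u a b v, (a < m ↔ b < m) → f (u ++ a :: b :: v) = f (u ++ b :: a :: v)

lemma InvF.perm {m : ℕ} {f : List ℕ → ℕ} (h : InvF m f) {l l' : List ℕ} (hp : l.Perm l') :
    ∀ (c : Prop), (∀ a ∈ l, (a < m ↔ c)) → ∀ u v, f (u ++ (l ++ v)) = f (u ++ (l' ++ v)) := by
  induction hp with
  | nil => intros; rfl
  | cons x _ ih =>
    intro c hc u v
    have := ih c (fun a ha => hc a (by simp [ha])) (u ++ [x]) v
    simpa using this
  | swap x y l =>
    intro c hc u v
    have := h u y x (l ++ v) (by rw [hc y (by simp), hc x (by simp)])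
    simpa using this
  | trans p q ih1 ih2 =>
    intro c hc u v
    rw [ih1 c hc, ih2 c (fun a ha => hc a (p.symm.subset ha))]

/-- generating polynomial -/
noncomputable def GP (f : List ℕ → ℕ) (s : Finset ℕ) : ℕ[X] := ∑ l ∈ PL s, C (f l) * X ^ lDes l

/-- canonical word of a set -/
noncomputable def cw (s : Finset ℕ) : List ℕ := s.toList

lemma perm_cw {s : Finset ℕ} {l : List ℕ} (h : l ∈ PL s) : l.Perm (cw s) := by
  rw [mem_PL] at h
  rw [cw, List.perm_ext_iff_of_nodup h.1 s.nodup_toList]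
  intro a; rw [← h.2]; simp

lemma block_eq (m : ℕ) (f : List ℕ → ℕ) (hf : InvF m f) (U V : Finset ℕ) (c : Prop)
    (hU : ∀ a ∈ U, (a < m ↔ c)) (q : List ℕ → Prop) [DecidablePred q] (e : ℕ)
    (hq : ∀ u ∈ PL U, ∀ v ∈ PL V, q v → lDes (u ++ v) = lDes u + lDes v + e) :
    ∑ u ∈ PL U, ∑ v ∈ (PL V).filter q, C (f (u ++ v)) * (X : ℕ[X]) ^ lDes (u ++ v) =
      X ^ e * EP U * GP (fun v => if q v then f (cw U ++ v) else 0) V := by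
  rw [EP, GP, mul_assoc, Finset.sum_mul, Finset.mul_sum]
  refine Finset.sum_congr rfl fun u hu => ?_
  rw [Finset.mul_sum, Finset.mul_sum, Finset.sum_filter]
  refine Finset.sum_congr rfl fun v hv => ?_
  split_ifs with h
  · have h1 := hf.perm (perm_cw hu) c (fun a ha => hU a (by
      rw [mem_PL] at hu; rw [← hu.2]; simpa using ha)) [] v
    simp only [List.nil_append] at h1
    rw [h1, hq u hu v hv h]; ring
  · simp

lemma InvF.sub {m : ℕ} {f : List ℕ → ℕ} (h : InvF m f) (w : List ℕ) (r : ℕ → Prop)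
    [DecidablePred r] (hr : ∀ a b, (a < m ↔ b < m) → (r a ↔ r b)) :
    InvF m (fun v => if (∀ a ∈ v.head?, r a) then f (w ++ v) else 0) := by
  intro u a b v hab
  have h1 := h (w ++ u) a b v hab
  simp only [List.append_assoc] at h1
  have h2 : (∀ x ∈ (u ++ a :: b :: v).head?, r x) ↔ (∀ x ∈ (u ++ b :: a :: v).head?, r x) := by
    cases u with
    | nil => simpa using hr a b hab
    | cons x u => simp
  simp only [h1, h2]

lemma main_good (m : ℕ) : ∀ (N : ℕ) (s : Finset ℕ), s.card = N → ∀ f, InvF m f →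
    (∀ l, f l ≠ 0 → ∃ a, l.getLast? = some a ∧ m ≤ a) →
    ((∀ l, f l ≠ 0 → ∃ a, l.head? = some a ∧ a < m) → GoodP N (X * GP f s)) ∧
    ((∀ l, f l ≠ 0 → ∃ a, l.head? = some a ∧ m ≤ a) → ∀ d, N = d + 1 → GoodP d (GP f s)) := by
  intro N
  induction N using Nat.strong_induction_on with
  | _ N ih =>
  intro s hs f hf hlast
  constructor
  · intro hhead
    rw [GP, sum_block (fun x => x < m), Finset.mul_sum]
    apply GoodP.sum
    intro U hU
    rw [Finset.mem_powerset] at hU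
    have hUs : U ⊆ s := hU.trans (Finset.filter_subset _ _)
    have hUm : ∀ a ∈ U, a < m := fun a ha => (Finset.mem_filter.1 (hU ha)).2
    have c1 := Finset.card_sdiff_add_card_eq_card hUs
    rw [block_eq m f hf U (s \ U) True (fun a ha => by simp [hUm a ha]) _ 0]
    · set f' : List ℕ → ℕ := fun v => if (∀ a ∈ v.head?, ¬ a < m) then f (cw U ++ v) else 0
        with hf'
      have i1 : InvF m f' := hf.sub _ _ (fun a b h => by rw [h])
      by_cases hU0 : U = ∅
      · have : GP f' (s \ U) = 0 := by
          rw [GP]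
          refine Finset.sum_eq_zero fun v hv => ?_
          have : f' v = 0 := by
            rw [hf']; simp only
            split_ifs with h
            · by_contra h2
              obtain ⟨a, h3, h4⟩ := hhead _ h2
              rw [hU0] at h3
              simp [cw] at h3
              exact h a (by simpa using h3) h4
            · rfl
          simp [this]
        rw [this]; simpa using GoodP.zero _
      have hUc : 0 < U.card := Finset.card_pos.2 (Finset.nonempty_iff_ne_empty.2 hU0)
      have hcw : ∀ v, v = [] → f (cw U ++ v) = 0 := by
        rintro v rfl
        by_contra h2
        obtain ⟨a, h3, h4⟩ := hlast _ h2
        simp only [List.append_nil] at h3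
        have := List.mem_of_getLast? h3
        have := hUm a (by simpa [cw] using this)
        omega
      have l1 : ∀ l, f' l ≠ 0 → (∀ a ∈ l.head?, ¬ a < m) ∧ f (cw U ++ l) ≠ 0 ∧ l ≠ [] := by
        intro l hl
        rw [hf'] at hl; simp only [ne_eq, ite_eq_right_iff, Classical.not_imp] at hl
        exact ⟨hl.1, hl.2, fun h => hl.2 (hcw l h)⟩
      by_cases hV0 : s \ U = ∅
      · have : GP f' (s \ U) = 0 := by
          rw [GP, hV0, PL_empty]
          have : f' [] = 0 := by
            by_contra h; exact (l1 _ h).2.2 rfl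
          simp [this]
        rw [this]; simpa using GoodP.zero _
      have hVc : 0 < (s \ U).card := Finset.card_pos.2 (Finset.nonempty_iff_ne_empty.2 hV0)
      have g1 := EP_good (U.card - 1) U (by omega)
      have g2 := (ih (s \ U).card (by omega) (s \ U) rfl f' i1 (by
        intro l hl
        obtain ⟨_, h2, h3⟩ := l1 l hl
        obtain ⟨a, h4, h5⟩ := hlast _ h2
        refine ⟨a, ?_, h5⟩
        rwa [List.getLast?_append_of_ne_nil _ h3] at h4)).2 (by
        intro l hl
        obtain ⟨h1, h2, h3⟩ := l1 l hl
        cases l with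
        | nil => simp at h3
        | cons a l => exact ⟨a, rfl, by have := h1 a rfl; omega⟩) ((s \ U).card - 1) (by omega)
      have := (g1.mul g2).mulX
      convert this using 1
      · omega
      · ring
    · intro u hu v hv hq
      rw [mem_PL] at hu
      cases v with
      | nil => simp [lDes]
      | cons b v =>
        rw [lDes_append, lDes_up]
        · rfl
        · intro x hx
          have := hUm x (by rw [← hu.2]; simpa using hx)
          have := hq b rfl
          omega
  · intro hhead d hd
    rw [GP, sum_block (fun x => m ≤ x)]
    apply GoodP.sum
    intro U hU
    rw [Finset.mem_powerset] at hU
    have hUs : U ⊆ s := hU.trans (Finset.filter_subset _ _)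
    have hUm : ∀ a ∈ U, m ≤ a := fun a ha => (Finset.mem_filter.1 (hU ha)).2
    have c1 := Finset.card_sdiff_add_card_eq_card hUs
    by_cases hU0 : U = ∅
    · have : ∑ u ∈ PL U, ∑ v ∈ (PL (s \ U)).filter (fun v => ∀ a ∈ v.head?, ¬ m ≤ a),
          C (f (u ++ v)) * (X : ℕ[X]) ^ lDes (u ++ v) = 0 := by
        refine Finset.sum_eq_zero fun u hu => Finset.sum_eq_zero fun v hv => ?_
        rw [hU0, PL_empty, Finset.mem_singleton] at hu
        subst hu
        have : f ([] ++ v) = 0 := by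
          by_contra h2
          obtain ⟨a, h3, h4⟩ := hhead _ h2
          exact (Finset.mem_filter.1 hv).2 a (by simpa using h3) h4
        rw [this]; simp
      rw [this]; exact GoodP.zero _
    have hUc : 0 < U.card := Finset.card_pos.2 (Finset.nonempty_iff_ne_empty.2 hU0)
    have g1 := EP_good (U.card - 1) U (by omega)
    by_cases hV0 : s \ U = ∅
    · rw [block_eq m f hf U (s \ U) False (fun a ha => by simp [hUm a ha]) _ 0]
      · rw [hV0, GP, PL_empty]
        rw [hV0] at c1
        simp only [Finset.card_empty] at c1
        have := g1.cmul (f (cw U))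
        convert this using 1
        · omega
        · simp [lDes]; ring
      · intro u hu v hv hq
        rw [hV0, PL_empty, Finset.mem_singleton] at hv
        subst hv
        simp [lDes]
    have hVc : 0 < (s \ U).card := Finset.card_pos.2 (Finset.nonempty_iff_ne_empty.2 hV0)
    rw [block_eq m f hf U (s \ U) False (fun a ha => by simp [hUm a ha]) _ 1]
    · set f' : List ℕ → ℕ := fun v => if (∀ a ∈ v.head?, ¬ m ≤ a) then f (cw U ++ v) else 0
        with hf'
      have i1 : InvF m f' := hf.sub _ _ (fun a b h => by simp [h])
      -- remove the empty word
      set f'' : List ℕ → ℕ := fun v => if v = [] then 0 else f' v with hf''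
      have i2 : InvF m f'' := by
        intro u a b v h
        simp [hf'', i1 u a b v h]
      have hGP : GP f' (s \ U) = GP f'' (s \ U) := by
        rw [GP, GP]
        refine Finset.sum_congr rfl fun v hv => ?_
        have : v ≠ [] := by
          rintro rfl
          rw [mem_PL] at hv
          exact hV0 hv.2.symm
        simp [hf'', this]
      have l1 : ∀ l, f'' l ≠ 0 → (∀ a ∈ l.head?, ¬ m ≤ a) ∧ f (cw U ++ l) ≠ 0 ∧ l ≠ [] := by
        intro l hl
        simp only [hf'', hf', ne_eq, ite_eq_left_iff, ite_eq_right_iff, Classical.not_imp] at hl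
        exact ⟨hl.2.1, hl.2.2, hl.1⟩
      have g2 := (ih (s \ U).card (by omega) (s \ U) rfl f'' i2 (by
        intro l hl
        obtain ⟨_, h2, h3⟩ := l1 l hl
        obtain ⟨a, h4, h5⟩ := hlast _ h2
        refine ⟨a, ?_, h5⟩
        rwa [List.getLast?_append_of_ne_nil _ h3] at h4)).1 (by
        intro l hl
        obtain ⟨h1, h2, h3⟩ := l1 l hl
        cases l with
        | nil => simp at h3
        | cons a l => exact ⟨a, rfl, by have := h1 a rfl; omega⟩)
      rw [hGP]
      have := g1.mul g2
      convert this using 1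
      · omega
      · ring
    · intro u hu v hv hq
      rw [mem_PL] at hu hv
      cases v with
      | nil => exact absurd hv.2.symm hV0
      | cons b v =>
        rw [lDes_append, lDes_down]
        · ring
        · intro x hx
          have := hUm x (by rw [← hu.2]; simpa using hx)
          have := hq b rfl
          omega
        · rintro rfl
          exact hU0 hu.2.symm
end blocks

section perms

lemma cs_val {m : ℕ} (i : Fin m) :
    ((cyclicSucc i : Fin m) : ℕ) = if (i : ℕ) + 1 < m then (i : ℕ) + 1 else 0 := by
  have := i.2
  simp only [cyclicSucc]
  split_ifs with h
  · exact Nat.mod_eq_of_lt h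
  · have : (i : ℕ) + 1 = m := by omega
    rw [this, Nat.mod_self]

noncomputable def desP {N : ℕ} (π : Equiv.Perm (Fin N)) : ℕ :=
  Set.ncard {i : Fin N | (i : ℕ) + 1 < N ∧ π (cyclicSucc i) < π i}

def LExt {N : ℕ} (R : Fin N → Fin N → Prop) : Set (Equiv.Perm (Fin N)) :=
  {π | ∀ i j, i < j → ¬ R (π j) (π i)}

noncomputable def cnt {N : ℕ} (R : Fin N → Fin N → Prop) (j : ℕ) : ℕ :=
  Set.ncard {π | π ∈ LExt R ∧ desP π = j}

lemma swap_lt {N : ℕ} {i i' : Fin N} (hi : (i' : ℕ) = i + 1) (x y : Fin N)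
    (h1 : ¬ (x = i ∧ y = i')) (h2 : ¬ (x = i' ∧ y = i)) :
    Equiv.swap i i' x < Equiv.swap i i' y ↔ x < y := by
  simp only [Equiv.swap_apply_def]
  simp only [Fin.ext_iff] at h1 h2
  split_ifs <;> simp only [Fin.ext_iff, Fin.lt_def] at * <;> omega

def adjP {N : ℕ} (i i' : Fin N) (π : Equiv.Perm (Fin N)) : Prop :=
  ((π.symm i : Fin N) : ℕ) + 1 = (π.symm i' : Fin N) ∨ ((π.symm i' : Fin N) : ℕ) + 1 = (π.symm i : Fin N)

lemma adjP_swap {N : ℕ} (i i' : Fin N) (π : Equiv.Perm (Fin N)) :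
    adjP i i' (Equiv.swap i i' * π) ↔ adjP i i' π := by
  have h1 : (Equiv.swap i i' * π).symm i = π.symm i' := by
    rw [Equiv.symm_apply_eq]; simp
  have h2 : (Equiv.swap i i' * π).symm i' = π.symm i := by
    rw [Equiv.symm_apply_eq]; simp
  rw [adjP, adjP, h1, h2, or_comm]

lemma desP_swap {N : ℕ} {i i' : Fin N} (hi : (i' : ℕ) = i + 1) (π : Equiv.Perm (Fin N))
    (h : ¬ adjP i i' π) : desP (Equiv.swap i i' * π) = desP π := by
  unfold desP
  congr 1
  ext k
  simp only [Set.mem_ofPred_eq, Equiv.Perm.mul_apply]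
  refine and_congr_right fun hk => swap_lt hi _ _ ?_ ?_
  · rintro ⟨e1, e2⟩
    apply h
    right
    rw [← e1, ← e2]; simp [cs_val, hk]
  · rintro ⟨e1, e2⟩
    apply h
    left
    rw [← e1, ← e2]; simp [cs_val, hk]

lemma ext_swap_adj {N : ℕ} {i i' : Fin N} (R : Fin N → Fin N → Prop)
    (h1 : ¬ R i i') (h2 : ¬ R i' i) (π : Equiv.Perm (Fin N)) (h : adjP i i' π) (hπ : π ∈ LExt R) :
    π ∈ LExt (fun x y => R (Equiv.swap i i' x) (Equiv.swap i i' y)) := by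
  obtain ⟨p, hp⟩ : ∃ p, p = π.symm i := ⟨_, rfl⟩
  obtain ⟨q, hq⟩ : ∃ p, p = π.symm i' := ⟨_, rfl⟩
  rw [adjP, ← hp, ← hq] at h
  have ep : i = π p := by rw [hp]; simp
  have eq : i' = π q := by rw [hq]; simp
  clear hp hq
  subst ep eq
  intro a b hab hR
  simp only [Equiv.swap_apply_def, π.injective.eq_iff] at hR
  have key := hπ
  simp only [LExt, Set.mem_ofPred_eq] at key
  split_ifs at hR with c1 c2 c3 c4 c5 c6 c7 c8
  all_goals first
    | exact h1 hR
    | exact h2 hR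
    | (refine key _ _ ?_ hR
       simp only [Fin.ext_iff, Fin.lt_def] at *
       omega)

lemma cnt_le {N : ℕ} {i i' : Fin N} (hi : (i' : ℕ) = i + 1) (R : Fin N → Fin N → Prop)
    (h1 : ¬ R i i') (h2 : ¬ R i' i) (j : ℕ) :
    cnt R j ≤ cnt (fun x y => R (Equiv.swap i i' x) (Equiv.swap i i' y)) j := by
  classical
  refine Set.ncard_le_ncard_of_injOn
    (fun π => if adjP i i' π then π else Equiv.swap i i' * π) ?_ ?_ (Set.toFinite _)
  · rintro π ⟨hE, hd⟩
    split_ifs with h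
    · exact ⟨ext_swap_adj R h1 h2 π h hE, hd⟩
    · refine ⟨?_, by rw [desP_swap hi π h, hd]⟩
      intro a b hab
      simpa using hE a b hab
  · intro π _ π' _ heq
    dsimp only at heq
    split_ifs at heq with c1 c2 c2
    · exact heq
    · rw [heq, adjP_swap] at c1; exact absurd c1 c2
    · rw [← heq, adjP_swap] at c2; exact absurd c2 c1
    · exact mul_left_cancel heq

lemma cnt_swap {N : ℕ} {i i' : Fin N} (hi : (i' : ℕ) = i + 1) (R : Fin N → Fin N → Prop)
    (h1 : ¬ R i i') (h2 : ¬ R i' i) (j : ℕ) :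
    cnt R j = cnt (fun x y => R (Equiv.swap i i' x) (Equiv.swap i i' y)) j := by
  refine le_antisymm (cnt_le hi R h1 h2 j) ?_
  refine (cnt_le hi _ ?_ ?_ j).trans ?_
  · simpa using h2
  · simpa using h1
  · simp

structure Crown {N : ℕ} (R : Fin N → Fin N → Prop) (low : Fin N → Prop) : Prop where
  lt : ∀ x y, R x y → x < y ∧ low x ∧ ¬ low y
  up : ∀ x, low x → ∃ y, R x y
  dn : ∀ y, ¬ low y → ∃ x, R x y

lemma Crown.swap {N : ℕ} {R : Fin N → Fin N → Prop} {low : Fin N → Prop} (h : Crown R low)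
    {i i' : Fin N} (hi : (i' : ℕ) = i + 1) (hl : ¬ low i) :
    Crown (fun x y => R (Equiv.swap i i' x) (Equiv.swap i i' y))
      (fun x => low (Equiv.swap i i' x)) where
  lt := by
    intro x y hR
    obtain ⟨h1, h2, h3⟩ := h.lt _ _ hR
    refine ⟨?_, h2, h3⟩
    rwa [swap_lt hi] at h1
    · rintro ⟨rfl, rfl⟩
      simp only [Equiv.swap_apply_left, Equiv.swap_apply_right] at h1
      rw [Fin.lt_def] at h1; omega
    · rintro ⟨rfl, rfl⟩
      simp only [Equiv.swap_apply_right] at h2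
      exact hl h2
  up := by
    intro x hx
    obtain ⟨y, hy⟩ := h.up _ hx
    exact ⟨Equiv.swap i i' y, by simpa using hy⟩
  dn := by
    intro x hx
    obtain ⟨y, hy⟩ := h.dn _ hx
    exact ⟨Equiv.swap i i' y, by simpa using hy⟩

lemma lDes_eq_sum (l : List ℕ) :
    lDes l = ∑ i ∈ Finset.range (l.length - 1), if l.getD (i + 1) 0 < l.getD i 0 then 1 else 0 := by
  induction l with
  | nil => simp [lDes]
  | cons a l ih =>
    cases l with
    | nil => simp [lDes]
    | cons b l =>
      rw [lDes, ih]
      simp only [List.length_cons, Nat.add_sub_cancel]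
      rw [Finset.sum_range_succ', add_comm]
      simp only [List.getD_cons_succ, List.getD_cons_zero]

/-- word of a permutation -/
def wd {N : ℕ} (π : Equiv.Perm (Fin N)) : List ℕ := List.ofFn (fun i => ((π i : Fin N) : ℕ))

lemma lDes_wd {N : ℕ} (π : Equiv.Perm (Fin N)) : lDes (wd π) = desP π := by
  rw [lDes_eq_sum, desP, ← Finset.card_filter]
  have hl : (wd π).length = N := by simp [wd]
  rw [hl, ← Set.ncard_coe_finset]
  symm
  have hg : ∀ (k : ℕ) (h : k < N), (wd π).getD k 0 = (π ⟨k, h⟩ : Fin N) := by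
    intro k h
    rw [List.getD_eq_getElem _ _ (by rw [hl]; exact h)]
    simp [wd]
  have hc : ∀ (k : Fin N) (h : (k : ℕ) + 1 < N), cyclicSucc k = ⟨k + 1, h⟩ := by
    intro k h; ext; simp [cs_val, h]
  refine Set.ncard_congr (fun i _ => (i : ℕ)) ?_ ?_ ?_
  · rintro k ⟨h1, h2⟩
    simp only [Finset.coe_filter, Finset.mem_range, Set.mem_ofPred_eq]
    refine ⟨by omega, ?_⟩
    rw [hg _ h1, hg _ k.2]
    rw [hc k h1] at h2
    exact h2
  · intro a b _ _ h; exact Fin.ext h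
  · intro k hk
    simp only [Finset.coe_filter, Finset.mem_range, Set.mem_ofPred_eq] at hk
    have h1 : k + 1 < N := by omega
    refine ⟨⟨k, by omega⟩, ⟨h1, ?_⟩, rfl⟩
    rw [hc ⟨k, by omega⟩ h1]
    rw [hg _ h1, hg k (by omega)] at hk
    exact hk.2

lemma wd_mem {N : ℕ} (π : Equiv.Perm (Fin N)) : wd π ∈ PL (Finset.range N) := by
  rw [mem_PL]
  constructor
  · rw [wd, List.nodup_ofFn]
    exact Fin.val_injective.comp π.injective
  · ext x
    simp only [wd, List.mem_toFinset, List.mem_ofFn, Finset.mem_range]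
    constructor
    · rintro ⟨i, rfl⟩; exact (π i).2
    · intro h; exact ⟨π.symm ⟨x, h⟩, by simp⟩

lemma wd_inj {N : ℕ} : Function.Injective (wd (N := N)) := by
  intro π π' h
  have := List.ofFn_injective h
  ext i
  exact congrFun this i

lemma wd_surj {N : ℕ} (l : List ℕ) (hl : l ∈ PL (Finset.range N)) : ∃ π : Equiv.Perm (Fin N), wd π = l := by
  rw [mem_PL] at hl
  obtain ⟨h1, h2⟩ := hl
  have hlen : l.length = N := by
    rw [← List.toFinset_card_of_nodup h1, h2, Finset.card_range]
  subst hlen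
  have hlt : ∀ x ∈ l, x < l.length := by
    intro x hx; rw [← Finset.mem_range, ← h2]; simpa using hx
  let g : Fin l.length → Fin l.length := fun i => ⟨l[i], hlt _ (List.getElem_mem _)⟩
  have hg : Function.Injective g := by
    intro a b hab
    have : l[a] = l[b] := congrArg Fin.val hab
    ext
    exact (h1.getElem_inj_iff).1 this
  refine ⟨Equiv.ofBijective g (Finite.injective_iff_bijective.1 hg), ?_⟩
  rw [wd]
  apply List.ext_getElem
  · simp
  · intro i _ _; simp [g]

def RN {N : ℕ} (R : Fin N → Fin N → Prop) (x y : ℕ) : Prop :=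
  ∃ (hx : x < N) (hy : y < N), R ⟨x, hx⟩ ⟨y, hy⟩

open Classical in
noncomputable def fR {N : ℕ} (R : Fin N → Fin N → Prop) (l : List ℕ) : ℕ :=
  if l ∈ PL (Finset.range N) ∧ l.Pairwise (fun x y => ¬ RN R y x) then 1 else 0

lemma wd_pairwise {N : ℕ} (R : Fin N → Fin N → Prop) (π : Equiv.Perm (Fin N)) :
    (wd π).Pairwise (fun x y => ¬ RN R y x) ↔ π ∈ LExt R := by
  rw [wd, List.pairwise_ofFn]
  simp [RN, LExt]

open Polynomial in
lemma cnt_eq_coeff {N : ℕ} (R : Fin N → Fin N → Prop) (j : ℕ) :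
    cnt R j = (GP (fR R) (Finset.range N)).coeff j := by
  classical
  rw [GP, finsetSum_coeff]
  have : ∀ l ∈ PL (Finset.range N), (C (fR R l) * X ^ lDes l : ℕ[X]).coeff j =
      if (l.Pairwise (fun x y => ¬ RN R y x) ∧ lDes l = j) then 1 else 0 := by
    intro l hl
    rw [coeff_C_mul, coeff_X_pow, fR]
    simp only [hl, true_and, eq_comm (a := j)]
    split_ifs <;> simp_all
  rw [Finset.sum_congr rfl this, ← Finset.card_filter, cnt,
    ← Set.ncard_image_of_injective _ wd_inj, ← Set.ncard_coe_finset]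
  congr 1
  ext l
  simp only [Set.mem_image, Set.mem_ofPred_eq, Finset.coe_filter]
  constructor
  · rintro ⟨π, ⟨h1, h2⟩, rfl⟩
    exact ⟨wd_mem π, (wd_pairwise R π).2 h1, by rw [lDes_wd, h2]⟩
  · rintro ⟨h1, h2, h3⟩
    obtain ⟨π, rfl⟩ := wd_surj l h1
    exact ⟨π, ⟨(wd_pairwise R π).1 h2, by rw [← lDes_wd, h3]⟩, rfl⟩

lemma inv_fR {N : ℕ} {R : Fin N → Fin N → Prop} {low : Fin N → Prop} (h : Crown R low) (m : ℕ)
    (hm : ∀ x, low x ↔ (x : ℕ) < m) : InvF m (fR R) := by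
  intro u a b v hab
  have r : ∀ x y, (x < m ↔ y < m) → ¬ RN R x y := by
    rintro x y hxy ⟨hx, hy, hR⟩
    obtain ⟨_, h2, h3⟩ := h.lt _ _ hR
    rw [hm] at h2 h3
    exact h3 (hxy.1 h2)
  have e1 : (u ++ a :: b :: v ∈ PL (Finset.range N)) ↔ (u ++ b :: a :: v ∈ PL (Finset.range N)) := by
    have p : (u ++ a :: b :: v).Perm (u ++ b :: a :: v) :=
      List.Perm.append_left u (List.Perm.swap b a v)
    rw [mem_PL, mem_PL, p.nodup_iff, List.toFinset_eq_of_perm _ _ p]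
  have e2 : (u ++ a :: b :: v).Pairwise (fun x y => ¬ RN R y x) ↔
      (u ++ b :: a :: v).Pairwise (fun x y => ¬ RN R y x) := by
    have r1 := r a b hab
    have r2 := r b a hab.symm
    simp only [List.pairwise_append, List.pairwise_cons, List.mem_cons, forall_eq_or_imp, r1, r2,
      not_false_eq_true, true_and]
    constructor
    · rintro ⟨h1, ⟨h2, h3, h4⟩, h5⟩
      exact ⟨h1, ⟨h3, h2, h4⟩, fun x hx => ⟨(h5 x hx).2.1, (h5 x hx).1, (h5 x hx).2.2⟩⟩
    · rintro ⟨h1, ⟨h2, h3, h4⟩, h5⟩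
      exact ⟨h1, ⟨h3, h2, h4⟩, fun x hx => ⟨(h5 x hx).2.1, (h5 x hx).1, (h5 x hx).2.2⟩⟩
  classical
  unfold fR
  convert if_congr (and_congr e1 e2) rfl rfl

open Polynomial in
lemma crown_sorted {N : ℕ} (hN : 0 < N) {R : Fin N → Fin N → Prop} {low : Fin N → Prop}
    (h : Crown R low) (m : ℕ) (hm : ∀ x, low x ↔ (x : ℕ) < m) :
    GoodP N (X * GP (fR R) (Finset.range N)) := by
  have hf : ∀ l, fR R l ≠ 0 → ∃ π : Equiv.Perm (Fin N), π ∈ LExt R ∧ l = wd π := by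
    intro l hl
    simp only [fR, ne_eq, ite_eq_right_iff, one_ne_zero, imp_false, not_not] at hl
    obtain ⟨π, rfl⟩ := wd_surj l hl.1
    exact ⟨π, (wd_pairwise R π).1 hl.2, rfl⟩
  refine (main_good m N _ (Finset.card_range N) (fR R) (inv_fR h m hm) ?_).1 ?_
  · intro l hl
    obtain ⟨π, h1, rfl⟩ := hf l hl
    let z : Fin N := ⟨N - 1, by omega⟩
    refine ⟨π z, ?_, ?_⟩
    · rw [List.getLast?_eq_getElem?]
      simp [wd, z, hN]
    · by_contra hlt
      obtain ⟨y, hy⟩ := h.up (π z) ((hm _).2 (by omega))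
      have hne : π.symm y ≠ z := by
        intro e
        have : y = π z := by rw [← e]; simp
        rw [this] at hy
        exact absurd (h.lt _ _ hy).1 (lt_irrefl _)
      have hlt : π.symm y < z := by
        have := (π.symm y).2
        rw [Fin.lt_def]
        rw [Ne, Fin.ext_iff] at hne
        simp only [z] at *
        omega
      exact h1 _ _ hlt (by simpa using hy)
  · intro l hl
    obtain ⟨π, h1, rfl⟩ := hf l hl
    let z : Fin N := ⟨0, hN⟩
    refine ⟨π z, ?_, ?_⟩
    · rw [List.head?_eq_getElem?]
      simp [wd, z, hN]
    · by_contra hlt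
      obtain ⟨y, hy⟩ := h.dn (π z) (fun h => hlt ((hm _).1 h))
      have hne : π.symm y ≠ z := by
        intro e
        have : y = π z := by rw [← e]; simp
        rw [this] at hy
        exact absurd (h.lt _ _ hy).1 (lt_irrefl _)
      have hlt : z < π.symm y := by
        rw [Fin.lt_def]
        rw [Ne, Fin.ext_iff] at hne
        simp only [z] at *
        omega
      exact h1 _ _ hlt (by simpa using hy)

open Classical in
lemma crown_all {N : ℕ} (hN : 0 < N) : ∀ (k : ℕ) (R : Fin N → Fin N → Prop) (low : Fin N → Prop),
    Crown R low → (∑ x : Fin N, if low x then (x : ℕ) else 0) = k →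
    (∀ i j, i + j + 2 = N → cnt R i = cnt R j) ∧ (∀ j, 2 * j + 3 ≤ N → cnt R j ≤ cnt R (j + 1)) := by
  intro k
  induction k using Nat.strong_induction_on with
  | _ k ih =>
  intro R low h hk
  by_cases hex : ∃ i i' : Fin N, (i' : ℕ) = i + 1 ∧ ¬ low i ∧ low i'
  · obtain ⟨i, i', hi, hl, hl'⟩ := hex
    have hc := cnt_swap hi R (fun hR => hl (h.lt _ _ hR).2.1)
      (fun hR => by have := (h.lt _ _ hR).1; rw [Fin.lt_def] at this; omega)
    simp only [hc]
    refine ih _ ?_ _ _ (h.swap hi hl) rfl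
    rw [← hk, ← Equiv.sum_comp (Equiv.swap i i')]
    apply Finset.sum_lt_sum
    · intro x _
      simp only [Equiv.swap_apply_self]
      split_ifs with hx
      · rw [Equiv.swap_apply_def]
        split_ifs with c1 c2
        · subst c1; exact absurd hx hl
        · subst c2; omega
        · exact le_rfl
      · exact le_rfl
    · refine ⟨i', Finset.mem_univ _, ?_⟩
      simp [hl']; omega
  · have hcl : ∀ c : ℕ, ∀ hc : c + 1 < N, low ⟨c + 1, hc⟩ → low ⟨c, by omega⟩ := by
      intro c hc hl
      by_contra hn
      exact hex ⟨⟨c, by omega⟩, ⟨c + 1, hc⟩, rfl, hn, hl⟩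
    have hcl2 : ∀ (e c : ℕ) (hc : c + e < N), low ⟨c + e, hc⟩ → low ⟨c, by omega⟩ := by
      intro e
      induction e with
      | zero => intro c hc hl; exact hl
      | succ e ih => intro c hc hl; exact ih c (by omega) (hcl (c + e) hc hl)
    have hP : ∃ c : ℕ, ¬ ∃ hc : c < N, low ⟨c, hc⟩ := ⟨N, by simp⟩
    have hm : ∀ x : Fin N, low x ↔ (x : ℕ) < Nat.find hP := by
      intro x
      constructor
      · intro hx
        rw [Nat.lt_find_iff]
        intro c hc hn
        refine hn ⟨by omega, ?_⟩
        refine hcl2 (x - c) c (by omega) ?_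
        convert hx
        omega
      · intro hx
        have := Nat.find_min hP hx
        rw [not_not] at this
        exact this.2
    have g := (crown_sorted hN h _ hm).su
    simp only [cnt_eq_coeff]
    constructor
    · intro i j hij
      have := g.1 (i + 1) (j + 1) (by omega)
      simpa [Polynomial.coeff_X_mul] using this
    · intro j hj
      have := g.2.2 (j + 1) (by omega)
      simpa [Polynomial.coeff_X_mul] using this

/-- the natural relabelling -/
def om0 (n : ℕ) (a : Fin (2 * n)) : Fin (2 * n) :=
  if h : (a : ℕ) = 0 ∨ (a : ℕ) + 1 = 2 * n then a
  else if (a : ℕ) % 2 = 1 then ⟨a + 1, by omega⟩ else ⟨a - 1, by omega⟩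

lemma om0_val (n : ℕ) (a : Fin (2 * n)) : ((om0 n a : Fin (2 * n)) : ℕ) =
    if (a : ℕ) = 0 ∨ (a : ℕ) + 1 = 2 * n then (a : ℕ) else
      if (a : ℕ) % 2 = 1 then (a : ℕ) + 1 else (a : ℕ) - 1 := by
  unfold om0
  split_ifs <;> rfl

lemma om0_inv (n : ℕ) : Function.Involutive (om0 n) := by
  intro a
  have := a.2
  have hb := om0_val n a
  ext
  rw [om0_val n (om0 n a)]
  generalize om0 n a = b at *
  split_ifs at * <;> omega

def om (n : ℕ) : Equiv.Perm (Fin (2 * n)) := (om0_inv n).toPerm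

lemma om_om (n : ℕ) (a) : om n (om n a) = a := om0_inv n a

def R0 (n : ℕ) (a b : Fin (2 * n)) : Prop :=
  (Even (a : ℕ) ∧ b = cyclicSucc a) ∨ (Odd (b : ℕ) ∧ a = cyclicSucc b)

lemma isCAP_iff {n : ℕ} (σ : Equiv.Perm (Fin (2 * n))) :
    IsCAP σ ↔ ∀ a b, R0 n a b → σ a < σ b := by
  constructor
  · rintro h a b (⟨h1, rfl⟩ | ⟨h1, rfl⟩)
    · exact (h a).1 h1
    · exact (h b).2 h1
  · intro h i
    exact ⟨fun h1 => h _ _ (Or.inl ⟨h1, rfl⟩), fun h1 => h _ _ (Or.inr ⟨h1, rfl⟩)⟩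

lemma crown0 (n : ℕ) : Crown (fun x y => R0 n (om n x) (om n y)) (fun x => Even ((om n x : Fin (2 * n)) : ℕ)) where
  lt := by
    intro x y h
    have hx := om_om n x
    have hy := om_om n y
    generalize om n x = a at *
    generalize om n y = b at *
    subst hx hy
    have ha := a.2
    have hb := b.2
    simp only [R0, Fin.ext_iff, cs_val, Nat.even_iff, Nat.odd_iff] at h
    rw [Fin.lt_def]
    change ((om0 n a : Fin (2 * n)) : ℕ) < (om0 n b : Fin (2 * n)) ∧ _
    rw [om0_val, om0_val, Nat.even_iff, Nat.even_iff]
    split_ifs at * <;> omega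
  up := by
    intro x h
    exact ⟨om n (cyclicSucc (om n x)), Or.inl ⟨h, by rw [om_om]⟩⟩
  dn := by
    intro x h
    exact ⟨om n (cyclicSucc (om n x)), Or.inr ⟨by simpa using h, by rw [om_om]⟩⟩

lemma cswap_eq {n : ℕ} (σ : Equiv.Perm (Fin (2 * n))) (h : IsCAP σ) :
    cswap σ = desP (om n * σ⁻¹) := by
  unfold cswap desP CSwapSet
  congr 1
  ext k
  simp only [Set.mem_ofPred_eq, Equiv.Perm.mul_apply]
  refine and_congr_right fun hk => ?_
  have hp : σ (σ⁻¹ k) = k := by simp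
  have hq : σ (σ⁻¹ (cyclicSucc k)) = cyclicSucc k := by simp
  generalize σ⁻¹ k = p at *
  generalize σ⁻¹ (cyclicSucc k) = q at *
  have hlt : σ p < σ q := by
    rw [hp, hq, Fin.lt_def, cs_val, if_pos hk]; omega
  have hne : (p : ℕ) ≠ q := by
    intro e
    rw [Fin.ext e] at hlt
    exact lt_irrefl _ hlt
  rw [isCAP_iff] at h
  have hR : ¬ R0 n q p := fun hR => lt_asymm hlt (h _ _ hR)
  have h1 := p.2
  have h2 := q.2
  simp only [R0, Fin.ext_iff, cs_val, Nat.even_iff, Nat.odd_iff] at hR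
  rw [Fin.lt_def]
  change _ ↔ ((om0 n q : Fin (2 * n)) : ℕ) < (om0 n p : Fin (2 * n))
  rw [om0_val, om0_val]
  split_ifs at * <;> omega

lemma count_eq (n : ℕ) (j : ℕ) :
    {σ : Equiv.Perm (Fin (2 * n)) | IsCAP σ ∧ cswap σ = j}.ncard =
      cnt (fun x y => R0 n (om n x) (om n y)) j := by
  have hE : ∀ σ : Equiv.Perm (Fin (2 * n)),
      om n * σ⁻¹ ∈ LExt (fun x y => R0 n (om n x) (om n y)) ↔ IsCAP σ := by
    intro σ
    rw [isCAP_iff]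
    simp only [LExt, Set.mem_ofPred_eq, Equiv.Perm.mul_apply, om_om]
    constructor
    · intro h a b hR
      by_contra hlt
      have hne : σ b ≠ σ a := by
        intro e
        have := σ.injective e
        subst this
        have h1 := b.2
        simp only [R0, Fin.ext_iff, cs_val, Nat.even_iff, Nat.odd_iff] at hR
        split_ifs at hR <;> omega
      exact h (σ b) (σ a) (lt_of_le_of_ne (not_lt.1 hlt) hne) (by simpa using hR)
    · intro h i j hij hR
      have := h _ _ hR
      simp at this
      exact lt_asymm hij this
  refine Set.ncard_congr (fun σ _ => om n * σ⁻¹) ?_ ?_ ?_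
  · rintro σ ⟨h1, h2⟩
    exact ⟨(hE σ).2 h1, by rw [← cswap_eq σ h1, h2]⟩
  · intro a b _ _ h
    exact inv_injective (mul_left_cancel h)
  · rintro π ⟨h1, h2⟩
    have e : om n * ((om n)⁻¹ * π)⁻¹⁻¹ = π := by simp
    have hc : IsCAP ((om n)⁻¹ * π)⁻¹ := by rw [← hE, e]; exact h1
    exact ⟨((om n)⁻¹ * π)⁻¹, ⟨hc, by rw [cswap_eq _ hc, e, h2]⟩, e⟩

end perms

/-- Corollary 5.19: the coefficients `h_j = #{σ ∈ CA_{2n} : cswap(σ) = j}` of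
the `h^*`-polynomial of `O(C_{2n})` form a symmetric and unimodal sequence. -/
theorem cswap_distribution_symmetric_unimodal (n : ℕ) (hn : 1 ≤ n) :
    (∀ j ≤ 2 * n - 2,
        {σ : Equiv.Perm (Fin (2 * n)) | IsCAP σ ∧ cswap σ = j}.ncard
          = {σ : Equiv.Perm (Fin (2 * n)) | IsCAP σ ∧ cswap σ = 2 * n - 2 - j}.ncard) ∧
      ∀ j, j + 1 ≤ n - 1 →
        {σ : Equiv.Perm (Fin (2 * n)) | IsCAP σ ∧ cswap σ = j}.ncard
          ≤ {σ : Equiv.Perm (Fin (2 * n)) | IsCAP σ ∧ cswap σ = j + 1}.ncard := by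
  have key := crown_all (N := 2 * n) (by omega) _ _ _ (crown0 n) rfl
  simp only [count_eq]
  exact ⟨fun j hj => key.1 _ _ (by omega), fun j hj => key.2 _ (by omega)⟩
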